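/- arXiv:1303.2299 — 2 statements merged into one kernel-verified Lean document; each statement's English description precedes it below -/
import Mathlib

section
/- Let T be a ℤ₊^k-action on a compact metric space X with generators {T_i : 1 ≤ i ≤ k}. Suppose the ball dimension D(X) of X is finite and each T_i is Lipschitz with Lipschitz constant L(T_i). Then h(T) ≤ log Σ_{i=1}^{k} L₊(T_i)^{D(X)}, where L₊(T_i) = max{1, L(T_i)}. -/
/-!
The orbits of length `N` that follow a fixed word `w` in the generators stay `ε`-close as soon as
their starting points are `ε / L_w`-close, where `L_w` is the product of the constants
`max 1 (L i)` along `w`. Covering `X` by `b(ε / L_w)` balls for each word therefore gives a cover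
of the orbit space by `∑_w b(ε / L_w)` dynamical balls (`exists_orbit_cover`). For every `D' > D(X)`
and small `ε`, `b(ε / L_w) ≤ (L_w / ε) ^ D'` uniformly in `w` because `L_w ≥ 1`
(`eventually_exists_ball_cover`), so the sum over words factorises and is at most
`ε ^ (-D') * (∑ i, max 1 (L i) ^ D') ^ N`. Its exponential growth rate is
`log ∑ i, max 1 (L i) ^ D'`, and letting `D'` decrease to `D(X)` gives the bound.
-/

open Filter

/-- The shift map on one-sided sequences. -/
def seqShift {X : Type*} : (ℕ → X) → (ℕ → X) := fun x n => x (n + 1)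

/-- The orbit space `X_T` of the `ℤ₊^k`-action generated by `T 0, …, T (k-1)`. -/
def orbitSpace {X : Type*} {k : ℕ} (T : Fin k → X → X) : Set (ℕ → X) :=
  {x | ∀ n : ℕ, ∃ i : Fin k, x (n + 1) = T i (x n)}

/-- Friedland's entropy of the `ℤ₊^k`-action generated by `T`. -/
noncomputable def friedlandEntropy {X : Type*} [UniformSpace X] {k : ℕ}
    (T : Fin k → X → X) : EReal :=
  Dynamics.coverEntropy seqShift (orbitSpace T)

/-- `b(ε)`: the minimal number of `ε`-balls needed to cover `X`. -/
noncomputable def ballCoverNum (X : Type*) [MetricSpace X] (ε : ℝ) : ℕ :=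
  sInf {m : ℕ | ∃ s : Finset X, s.card = m ∧ (⋃ x ∈ s, Metric.ball x ε) = Set.univ}

/-- The ball dimension `D(X) = limsup_{ε→0⁺} log b(ε) / |log ε| ∈ ℝ ∪ {∞}`. -/
noncomputable def ballDim (X : Type*) [MetricSpace X] : EReal :=
  limsup (fun ε : ℝ => ((Real.log (ballCoverNum X ε) / |Real.log ε| : ℝ) : EReal))
    (nhdsWithin 0 (Set.Ioi 0))

/-- The sequence starting at `x` that follows the word `w` for `N` steps and is constant
afterwards. -/
def wordPath {X : Type*} {k N : ℕ} (T : Fin k → X → X) (w : Fin N → Fin k) (x : X) : ℕ → X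
  | 0 => x
  | j + 1 => if h : j < N then T (w ⟨j, h⟩) (wordPath T w x j) else wordPath T w x j

lemma dist_wordPath_le {X : Type*} [MetricSpace X] {k N : ℕ} (T : Fin k → X → X)
    (L : Fin k → NNReal) (hL : ∀ i, LipschitzWith (L i) (T i)) (w : Fin N → Fin k) (x : X)
    (y : ℕ → X) (hy : ∀ j : Fin N, y (j + 1) = T (w j) (y j)) (j : ℕ) (hj : j ≤ N) :
    dist (y j) (wordPath T w x j) ≤ (∏ i, max 1 (L (w i) : ℝ)) * dist (y 0) x := by
  -- Extending the factors by `1` beyond `N` lets the partial products be taken over `range`.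
  set f : ℕ → ℝ := fun j => if h : j < N then max 1 (L (w ⟨j, h⟩) : ℝ) else 1 with hf
  have hf1 : ∀ j, 1 ≤ f j := by
    intro j
    simp only [hf]
    split_ifs <;> simp
  have hprod : ∏ i, max 1 (L (w i) : ℝ) = ∏ j ∈ Finset.range N, f j := by
    rw [← Fin.prod_univ_eq_prod_range]
    simp [hf]
  have key : ∀ j ≤ N, dist (y j) (wordPath T w x j) ≤
      (∏ j ∈ Finset.range j, f j) * dist (y 0) x := by
    intro j
    induction j with
    | zero => intro _; simp [wordPath]
    | succ j ih =>
      intro hj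
      have hjN : j < N := hj
      have h1 := ih hjN.le
      have h2 := hy ⟨j, hjN⟩
      simp only at h2
      rw [h2, wordPath, dif_pos hjN, Finset.prod_range_succ]
      have h3 : f j = max 1 (L (w ⟨j, hjN⟩) : ℝ) := by simp [hf, hjN]
      calc _ ≤ (L (w ⟨j, hjN⟩) : ℝ) * dist (y j) (wordPath T w x j) := (hL _).dist_le_mul _ _
        _ ≤ f j * ((∏ j ∈ Finset.range j, f j) * dist (y 0) x) := by
          rw [h3] at *
          gcongr
          exact le_max_right _ _
        _ = _ := by ring
  refine (key j hj).trans ?_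
  rw [hprod]
  gcongr
  · exact fun i _ => zero_le_one.trans (hf1 i)
  · exact fun i _ _ => hf1 i

lemma eventually_exists_ball_cover {X : Type*} [MetricSpace X] [CompactSpace X] {D : ℝ}
    (hD : ballDim X < D) :
    ∀ᶠ ε : ℝ in nhdsWithin 0 (Set.Ioi 0), ∃ s : Finset X, (s.card : ℝ) ≤ ε ^ (-D) ∧
      ∀ y, ∃ x ∈ s, dist y x < ε := by
  have h1 := eventually_lt_of_limsup_lt hD
  filter_upwards [h1, Ioo_mem_nhdsGT (zero_lt_one' ℝ)] with ε hε ⟨h0, hlt⟩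
  have hne : {m : ℕ | ∃ s : Finset X, s.card = m ∧
      (⋃ x ∈ s, Metric.ball x ε) = Set.univ}.Nonempty := by
    obtain ⟨t, -, htf, ht⟩ := (isCompact_univ (X := X)).finite_cover_balls h0
    refine ⟨_, htf.toFinset, rfl, Set.eq_univ_of_univ_subset ?_⟩
    simpa using ht
  obtain ⟨s, hs, hcov⟩ := Nat.sInf_mem hne
  change s.card = ballCoverNum X ε at hs
  refine ⟨s, ?_, fun y => ?_⟩
  · rw [← hs, EReal.coe_lt_coe_iff] at hε
    have hlog : Real.log ε < 0 := Real.log_neg h0 hlt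
    rw [abs_of_neg hlog, div_lt_iff₀ (by linarith)] at hε
    rw [Real.rpow_def_of_pos h0]
    rcases Nat.eq_zero_or_pos s.card with h | h
    · rw [h]
      simp only [Nat.cast_zero]
      positivity
    · rw [← Real.log_le_iff_le_exp (by exact_mod_cast h)]
      linarith
  · have : y ∈ (⋃ x ∈ s, Metric.ball x ε) := by rw [hcov]; trivial
    simpa using this

/-- Entourages of the product uniformity only constrain finitely many coordinates. -/
lemma exists_dist_of_mem_uniformity {X : Type*} [MetricSpace X] {U : SetRel (ℕ → X) (ℕ → X)}
    (hU : U ∈ uniformity (ℕ → X)) :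
    ∃ m : ℕ, ∀ᶠ ε : ℝ in nhdsWithin 0 (Set.Ioi 0),
      ∀ x y : ℕ → X, (∀ j ≤ m, dist (x j) (y j) < ε) → (x, y) ∈ U := by
  rw [Pi.uniformity, mem_iInf'] at hU
  obtain ⟨I, hI, V, hV, -, hUV, -⟩ := hU
  obtain ⟨m, hm⟩ := hI.bddAbove
  refine ⟨m, ?_⟩
  have h : ∀ᶠ ε : ℝ in nhdsWithin 0 (Set.Ioi 0), ∀ i ∈ I, ∀ x y : ℕ → X,
      dist (x i) (y i) < ε → (x, y) ∈ V i := by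
    rw [eventually_all_finite hI]
    intro i _
    obtain ⟨W, hW, hWV⟩ := mem_comap.1 (hV i)
    obtain ⟨δ, hδ, hδW⟩ := Metric.mem_uniformity_dist.1 hW
    filter_upwards [Ioo_mem_nhdsGT hδ] with ε hε x y hxy
    exact hWV (hδW (hxy.trans hε.2))
  filter_upwards [h] with ε hε x y hxy
  rw [hUV]
  exact Set.mem_iInter₂.2 fun i hi => hε i hi x y (hxy i (hm hi))

/-- The counting estimate: one family of starting points at scale `ε / L_w` for each word `w`. -/
lemma exists_orbit_cover {X : Type*} [MetricSpace X] {k : ℕ}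
    (T : Fin k → X → X) (L : Fin k → NNReal) (hL : ∀ i, LipschitzWith (L i) (T i))
    {D ε : ℝ} (hε : 0 < ε)
    (hb : ∀ δ : ℝ, 0 < δ → δ ≤ ε → ∃ s : Finset X, (s.card : ℝ) ≤ δ ^ (-D) ∧
      ∀ y, ∃ x ∈ s, dist y x < δ) (N : ℕ) :
    ∃ S : Finset (ℕ → X),
      (S.card : ℝ) ≤ ε ^ (-D) * (∑ i : Fin k, (max 1 (L i : ℝ)) ^ D) ^ N ∧
      ∀ y ∈ orbitSpace T, ∃ c ∈ S, ∀ j ≤ N, dist (y j) (c j) < ε := by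
  classical
  set P : (Fin N → Fin k) → ℝ := fun w => ∏ i, max 1 (L (w i) : ℝ) with hP
  have hP1 : ∀ w, 1 ≤ P w := by
    intro w
    exact Finset.one_le_prod fun i _ => le_max_left _ _
  have hP0 : ∀ w, 0 < P w := fun w => one_pos.trans_le (hP1 w)
  have hb' : ∀ w, ∃ s : Finset X, (s.card : ℝ) ≤ (ε / P w) ^ (-D) ∧
      ∀ y, ∃ x ∈ s, dist y x < ε / P w := fun w =>
    hb _ (div_pos hε (hP0 w)) (div_le_self hε.le (hP1 w))
  choose s hs hcov using hb'
  refine ⟨Finset.univ.biUnion fun w => (s w).image (wordPath T w), ?_, ?_⟩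
  · calc _ ≤ ((∑ w, (s w).card : ℕ) : ℝ) := by
          exact_mod_cast Finset.card_biUnion_le.trans
            (Finset.sum_le_sum fun w _ => Finset.card_image_le)
      _ = ∑ w, ((s w).card : ℝ) := by push_cast; rfl
      _ ≤ ∑ w : Fin N → Fin k, ε ^ (-D) * ∏ i, (max 1 (L (w i) : ℝ)) ^ D := by
          refine Finset.sum_le_sum fun w _ => (hs w).trans_eq ?_
          rw [Real.div_rpow hε.le (hP0 w).le, Real.rpow_neg (hP0 w).le, div_inv_eq_mul, hP,
            Real.finsetProd_rpow]
          intro i _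
          positivity
      _ = _ := by
          rw [← Finset.mul_sum, Finset.sum_pow', Fintype.piFinset_univ]
  · intro y hy
    choose v hv using hy
    obtain ⟨x, hx, hxy⟩ := hcov (fun i : Fin N => v i) (y 0)
    refine ⟨wordPath T (fun i : Fin N => v i) x, ?_, fun j hj => ?_⟩
    · simp only [Finset.mem_biUnion, Finset.mem_univ, true_and, Finset.mem_image]
      exact ⟨_, x, hx, rfl⟩
    · refine (dist_wordPath_le T L hL _ x y (fun i => hv i) j hj).trans_lt ?_
      rw [lt_div_iff₀ (hP0 _), mul_comm] at hxy
      exact hxy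

lemma seqShift_iterate {X : Type*} (x : ℕ → X) (n j : ℕ) : (seqShift^[n] x) j = x (j + n) := by
  induction n generalizing x with
  | zero => rfl
  | succ n ih =>
    rw [Function.iterate_succ_apply, ih]
    rfl

lemma friedlandEntropy_le_of_ballDim_lt {X : Type*} [MetricSpace X] [CompactSpace X] {k : ℕ}
    [NeZero k] (T : Fin k → X → X) (L : Fin k → NNReal) (hL : ∀ i, LipschitzWith (L i) (T i))
    {D : ℝ} (hD : ballDim X < D) :
    friedlandEntropy T ≤ ((Real.log (∑ i : Fin k, (max 1 (L i : ℝ)) ^ D) : ℝ) : EReal) := by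
  set S := ∑ i : Fin k, (max 1 (L i : ℝ)) ^ D with hS
  have hSpos : 0 < S := Finset.sum_pos (fun i _ => by positivity) Finset.univ_nonempty
  refine iSup₂_le fun U hU => ?_
  obtain ⟨m, hm⟩ := exists_dist_of_mem_uniformity hU
  obtain ⟨ε₀, hε₀, hsub⟩ :=
    mem_nhdsGT_iff_exists_Ioc_subset.1 (hm.and (eventually_exists_ball_cover hD))
  have hε₀ : 0 < ε₀ := hε₀
  have hcount : ∀ n, (Dynamics.coverMincard seqShift (orbitSpace T) U n : ENNReal) ≤
      ENNReal.ofReal (ε₀ ^ (-D) * S ^ m) * ENNReal.ofReal S ^ n := by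
    intro n
    obtain ⟨C, hC, hcov⟩ := exists_orbit_cover T L hL hε₀
      (fun δ h0 h1 => (hsub ⟨h0, h1⟩).2) (m + n)
    have hdyn : Dynamics.IsDynCoverOf seqShift (orbitSpace T) U n C := by
      intro y hy
      obtain ⟨c, hc, hyc⟩ := hcov y hy
      refine ⟨c, hc, ?_⟩
      rw [Dynamics.mem_dynEntourage]
      intro i hi
      refine (hsub ⟨hε₀, le_rfl⟩).1 _ _ fun j hj => ?_
      rw [seqShift_iterate, seqShift_iterate]
      exact hyc _ (by omega)
    calc (Dynamics.coverMincard seqShift (orbitSpace T) U n : ENNReal)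
        ≤ ((C.card : ℕ∞) : ENNReal) := ENat.toENNReal_mono hdyn.coverMincard_le_card
      _ = ENNReal.ofReal (C.card : ℝ) := by simp
      _ ≤ ENNReal.ofReal ((ε₀ ^ (-D) * S ^ m) * S ^ n) := by
          refine ENNReal.ofReal_le_ofReal (hC.trans_eq ?_)
          rw [pow_add, mul_assoc]
      _ = _ := by
          rw [ENNReal.ofReal_mul (by positivity), ENNReal.ofReal_pow hSpos.le]
  have hc0 : ENNReal.ofReal (ε₀ ^ (-D) * S ^ m) ≠ 0 := by
    have : 0 < ε₀ ^ (-D) * S ^ m := by positivity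
    simpa using this
  have hconst := ExpGrowth.expGrowthSup_const hc0 ENNReal.ofReal_ne_top
  calc Dynamics.coverEntropyEntourage seqShift (orbitSpace T) U
      ≤ ExpGrowth.expGrowthSup ((fun _ => ENNReal.ofReal (ε₀ ^ (-D) * S ^ m)) *
          fun n => ENNReal.ofReal S ^ n) := ExpGrowth.expGrowthSup_monotone hcount
    _ ≤ _ := ExpGrowth.expGrowthSup_mul_le (by rw [hconst]; simp) (by rw [hconst]; simp)
    _ = _ := by
      rw [hconst, ExpGrowth.expGrowthSup_pow, zero_add, ENNReal.log_ofReal_of_pos hSpos]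

/-- if `X` has finite ball dimension `D(X)` and each generator `T i` is
Lipschitz with Lipschitz constant `L i`, then
`h(T) ≤ log ∑ᵢ (max 1 (L i))^{D(X)}`. -/
theorem friedlandEntropy_le_of_lipschitz {X : Type*} [MetricSpace X] [CompactSpace X] {k : ℕ}
    (T : Fin k → X → X) (L : Fin k → NNReal) (hL : ∀ i, LipschitzWith (L i) (T i))
    (hD : ballDim X ≠ ⊤) :
    friedlandEntropy T ≤
      ((Real.log (∑ i : Fin k, (max 1 (L i : ℝ)) ^ (ballDim X).toReal) : ℝ) : EReal) := by
  rcases Nat.eq_zero_or_pos k with rfl | hk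
  · -- Without generators the orbit space is empty and its entropy is `⊥`.
    have : orbitSpace T = ∅ := by
      ext x
      simp [orbitSpace]
    rw [friedlandEntropy, this, Dynamics.coverEntropy_empty]
    exact bot_le
  have : NeZero k := ⟨hk.ne'⟩
  have hcont : ContinuousAt (fun D : ℝ => Real.log (∑ i : Fin k, (max 1 (L i : ℝ)) ^ D))
      (ballDim X).toReal := by
    refine ContinuousAt.log ?_ ?_
    · refine tendsto_finsetSum _ fun i _ => ?_
      exact (Real.continuous_const_rpow (by positivity)).continuousAt
    · exact (Finset.sum_pos (fun i _ => by positivity) Finset.univ_nonempty).ne'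
  have hlim := (continuous_coe_real_ereal.continuousAt.tendsto.comp hcont.tendsto).mono_left
    (nhdsWithin_le_nhds (s := Set.Ioi (ballDim X).toReal))
  refine ge_of_tendsto hlim ?_
  filter_upwards [self_mem_nhdsWithin] with D hDD
  exact friedlandEntropy_le_of_ballDim_lt T L hL
    ((EReal.le_coe_toReal hD).trans_lt (EReal.coe_lt_coe_iff.2 hDD))
end

section
/- Let T₁,…,T_k be continuous self-maps of a compact metric space X with finite ball dimension D(X), each T_i Lipschitz with Lipschitz constant L(T_i), and set L = max_{1≤i≤k} max{1, L(T_i)}. Then the topological entropy of the skew product σ̃ on Σ_k × X satisfies h(σ̃) ≤ log k + D(X)·log L. -/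
/-!
An entourage of `Σ_k × X` contains all pairs whose sequences agree on the first `m` symbols and
whose points are `ε`-close (`exists_cylinder_ball_subset`). Let `M > L` bound all the Lipschitz
constants. Two points whose sequences agree on the first `n + m` symbols and whose `X`-coordinates
are `ε / M ^ n`-close stay close in this sense for `n` steps, since the fibre maps along a common
word of length `j` expand distances by at most `M ^ j`. Hence words of length `n + m`, paired with
the centres of a minimal cover of `X` by `ε / M ^ n`-balls, give a dynamical cover with at most
`k ^ (n + m) * b(ε / M ^ n)` elements (`coverMincard_skewProd_le`). For `D' > D(X)` and large `n`,
`log b(ε / M ^ n) ≤ D' * (n * log M - log ε)`, so the growth rate is at most `log k + D' * log M`.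
Letting `D'` decrease to `D(X)` and `M` to `L` gives the bound. Requiring `M > L ≥ 1` strictly makes
the radii `ε / M ^ n` tend to `0` even when `L = 1`.
-/

open Filter

/-- The discrete uniformity on `Fin k` (inducing the discrete topology). -/
instance (k : ℕ) : UniformSpace (Fin k) := ⊥

/-- The skew product `σ̃` on `Σ_k × X` over the full shift on `Σ_k = {1,…,k}^{ℤ₊}`,
whose fiber maps are the generators `T i`. -/
def skewProd {X : Type*} {k : ℕ} (T : Fin k → X → X) :
    (ℕ → Fin k) × X → (ℕ → Fin k) × X :=
  fun p => (seqShift p.1, T (p.1 0) p.2)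

open Topology Uniformity

lemma skewProd_iterate_fst {X : Type*} {k : ℕ} (T : Fin k → X → X) (j : ℕ) :
    ∀ (p : (ℕ → Fin k) × X) (i : ℕ), ((skewProd T)^[j] p).1 i = p.1 (i + j) := by
  induction j with
  | zero => intro p i; rfl
  | succ j ih =>
    intro p i
    rw [Function.iterate_succ_apply, ih]
    simp only [skewProd, seqShift]
    congr 1

lemma dist_skewProd_iterate_le {X : Type*} [MetricSpace X] {k : ℕ} (T : Fin k → X → X) {M : ℝ}
    (hM : 0 ≤ M) (hT : ∀ i x y, dist (T i x) (T i y) ≤ M * dist x y) (j : ℕ) :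
    ∀ p q : (ℕ → Fin k) × X, (∀ i < j, p.1 i = q.1 i) →
      dist ((skewProd T)^[j] p).2 ((skewProd T)^[j] q).2 ≤ M ^ j * dist p.2 q.2 := by
  induction j with
  | zero => intro p q _; simp
  | succ j ih =>
    intro p q h
    rw [Function.iterate_succ_apply, Function.iterate_succ_apply]
    refine (ih _ _ fun i hi => ?_).trans ?_
    · exact h (i + 1) (by omega)
    · have h0 : p.1 0 = q.1 0 := h 0 (by omega)
      simp only [skewProd]
      rw [h0, pow_succ, mul_assoc]
      exact mul_le_mul_of_nonneg_left (hT _ _ _) (pow_nonneg hM _)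

lemma exists_cylinder_subset {k : ℕ} {V : Set ((ℕ → Fin k) × (ℕ → Fin k))}
    (hV : V ∈ 𝓤 (ℕ → Fin k)) :
    ∃ m : ℕ, ∀ a b : ℕ → Fin k, (∀ i < m, a i = b i) → (a, b) ∈ V := by
  have hle : (⨅ m : ℕ, 𝓟 {x : (ℕ → Fin k) × (ℕ → Fin k) | ∀ i < m, x.1 i = x.2 i})
      ≤ 𝓤 (ℕ → Fin k) := by
    rw [Pi.uniformity]
    refine le_iInf fun i => (iInf_le _ (i + 1)).trans ?_
    rw [← tendsto_iff_comap]
    intro W hW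
    rw [mem_map, mem_principal]
    intro x hx
    have hx' : x.1 i = x.2 i := hx i (by omega)
    simp only [Set.mem_preimage, hx']
    exact refl_mem_uniformity hW
  have hV' := hle hV
  rw [mem_iInf_of_directed] at hV'
  · obtain ⟨m, hm⟩ := hV'
    exact ⟨m, fun a b h => hm (show (a, b) ∈ {x : (ℕ → Fin k) × (ℕ → Fin k) | _} from h)⟩
  · refine directed_of_isDirected_le fun a b hab => ?_
    exact principal_mono.2 fun x hx i hi => hx i (by omega)

lemma exists_cylinder_ball_subset {X : Type*} [MetricSpace X] {k : ℕ}
    {U : Set (((ℕ → Fin k) × X) × ((ℕ → Fin k) × X))} (hU : U ∈ 𝓤 ((ℕ → Fin k) × X)) :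
    ∃ m : ℕ, ∃ ε > 0, ∀ p q : (ℕ → Fin k) × X,
      (∀ i < m, p.1 i = q.1 i) → dist p.2 q.2 < ε → (p, q) ∈ U := by
  rw [uniformity_prod] at hU
  obtain ⟨A, ⟨V, hV, hVA⟩, B, ⟨W, hW, hWB⟩, rfl⟩ := hU
  obtain ⟨m, hm⟩ := exists_cylinder_subset hV
  obtain ⟨ε, hε, hεW⟩ := Metric.mem_uniformity_dist.1 hW
  exact ⟨m, ε, hε, fun p q h1 h2 => ⟨hVA (hm _ _ h1), hWB (hεW h2)⟩⟩

/-- Compactness makes the infimum defining `b(ε)` one over a nonempty set, hence attained. -/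
lemma exists_card_eq_ballCoverNum (X : Type*) [MetricSpace X] [CompactSpace X] {ε : ℝ}
    (hε : 0 < ε) :
    ∃ s : Finset X, s.card = ballCoverNum X ε ∧ (⋃ x ∈ s, Metric.ball x ε) = Set.univ := by
  refine Nat.sInf_mem
    (s := {m : ℕ | ∃ s : Finset X, s.card = m ∧ (⋃ x ∈ s, Metric.ball x ε) = Set.univ}) ?_
  obtain ⟨t, htf, ht⟩ := Metric.totallyBounded_iff.1
    (isCompact_univ (X := X)).totallyBounded ε hε
  refine ⟨htf.toFinset.card, htf.toFinset, rfl, ?_⟩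
  simpa [Set.univ_subset_iff] using ht

lemma coverMincard_skewProd_le {X : Type*} [MetricSpace X] [CompactSpace X] {k : ℕ}
    (hk : 0 < k) (T : Fin k → X → X) {M : ℝ} (hM : 1 ≤ M)
    (hT : ∀ i x y, dist (T i x) (T i y) ≤ M * dist x y)
    {U : Set (((ℕ → Fin k) × X) × ((ℕ → Fin k) × X))} {m : ℕ} {ε : ℝ} (hε : 0 < ε)
    (hU : ∀ p q : (ℕ → Fin k) × X,
      (∀ i < m, p.1 i = q.1 i) → dist p.2 q.2 < ε → (p, q) ∈ U) (n : ℕ) :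
    Dynamics.coverMincard (skewProd T) Set.univ U n ≤
      ((k ^ (n + m) * ballCoverNum X (ε / M ^ n) : ℕ) : ℕ∞) := by
  classical
  have hM0 : 0 < M := by linarith
  obtain ⟨s, hs, hcov⟩ := exists_card_eq_ballCoverNum X (ε := ε / M ^ n) (by positivity)
  -- Words of length `n + m` are extended to infinite sequences by a constant tail.
  let e : (Fin (n + m) → Fin k) × X → (ℕ → Fin k) × X :=
    fun q => (fun i => if h : i < n + m then q.1 ⟨i, h⟩ else ⟨0, hk⟩, q.2)
  let C : Finset ((ℕ → Fin k) × X) := ((Finset.univ : Finset (Fin (n + m) → Fin k)) ×ˢ s).image e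
  have hC : Dynamics.IsDynCoverOf (skewProd T) Set.univ U n (C : Set ((ℕ → Fin k) × X)) := by
    rintro ⟨ω, y⟩ -
    have hy : y ∈ ⋃ x ∈ s, Metric.ball x (ε / M ^ n) := by rw [hcov]; trivial
    simp only [Set.mem_iUnion, Metric.mem_ball, exists_prop] at hy
    obtain ⟨x, hxs, hxy⟩ := hy
    refine ⟨e (fun i => ω i, x), ?_, ?_⟩
    · exact Finset.mem_coe.2 (Finset.mem_image_of_mem _ (by simp [hxs]))
    · have hagree : ∀ i < n + m, ω i = (e (fun i => ω i, x)).1 i := by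
        intro i hi
        simp [e, hi]
      refine Dynamics.mem_dynEntourage.2 fun j hj => hU _ _ (fun i hi => ?_) ?_
      · rw [skewProd_iterate_fst, skewProd_iterate_fst]
        exact hagree _ (by omega)
      · refine (dist_skewProd_iterate_le T hM0.le hT j _ _
          fun i hi => hagree i (by omega)).trans_lt ?_
        calc M ^ j * dist y x ≤ M ^ n * dist y x := by gcongr
          _ < M ^ n * (ε / M ^ n) := by gcongr
          _ = ε := by field_simp
  refine hC.coverMincard_le_card.trans ?_
  have hcard : C.card ≤ k ^ (n + m) * ballCoverNum X (ε / M ^ n) := by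
    refine Finset.card_image_le.trans ?_
    rw [Finset.card_product, hs]
    simp
  exact_mod_cast hcard

lemma eventually_log_ballCoverNum_le {X : Type*} [MetricSpace X] {D ε M : ℝ}
    (hD : ballDim X < (D : EReal)) (hε : 0 < ε) (hM : 1 < M) :
    ∀ᶠ n : ℕ in atTop,
      Real.log (ballCoverNum X (ε / M ^ n)) ≤ D * (n * Real.log M - Real.log ε) := by
  have hM0 : 0 < M := by linarith
  have htend : Tendsto (fun n : ℕ => ε / M ^ n) atTop (𝓝 0) :=
    (tendsto_pow_atTop_atTop_of_one_lt hM).const_div_atTop ε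
  have htend' : Tendsto (fun n : ℕ => ε / M ^ n) atTop (𝓝[>] 0) :=
    tendsto_nhdsWithin_iff.2 ⟨htend, Eventually.of_forall fun n => by
      simp only [Set.mem_Ioi]; positivity⟩
  filter_upwards [htend'.eventually (eventually_lt_of_limsup_lt hD),
    htend.eventually (gt_mem_nhds one_pos)] with n h1 h2
  have hpos : 0 < ε / M ^ n := by positivity
  have hneg : Real.log (ε / M ^ n) < 0 := Real.log_neg hpos h2
  have habs : |Real.log (ε / M ^ n)| = n * Real.log M - Real.log ε := by
    rw [abs_of_neg hneg, Real.log_div hε.ne' (by positivity), Real.log_pow]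
    ring
  rw [EReal.coe_lt_coe_iff, div_lt_iff₀ (abs_pos.2 hneg.ne), habs] at h1
  exact h1.le

lemma coverEntropyEntourage_skewProd_le {X : Type*} [MetricSpace X] [CompactSpace X] {k : ℕ}
    (hk : 0 < k) (T : Fin k → X → X) {M : ℝ} (hM : 1 < M)
    (hT : ∀ i x y, dist (T i x) (T i y) ≤ M * dist x y) {D c : ℝ} (hD : ballDim X < (D : EReal))
    (hc : Real.log k + D * Real.log M < c)
    {U : Set (((ℕ → Fin k) × X) × ((ℕ → Fin k) × X))} (hU : U ∈ 𝓤 ((ℕ → Fin k) × X)) :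
    Dynamics.coverEntropyEntourage (skewProd T) Set.univ U ≤ (c : EReal) := by
  obtain ⟨m, ε, hε, hU'⟩ := exists_cylinder_ball_subset hU
  have hM0 : 0 < M := by linarith
  have hlarge : ∀ᶠ n : ℕ in atTop,
      m * Real.log k - D * Real.log ε ≤ n * (c - (Real.log k + D * Real.log M)) :=
    (tendsto_natCast_atTop_atTop.atTop_mul_const (sub_pos.2 hc)).eventually_ge_atTop _
  refine Eventually.expGrowthSup_le ?_
  filter_upwards [eventually_log_ballCoverNum_le hD hε hM, hlarge] with n h1 h2
  have hmin := coverMincard_skewProd_le hk T hM.le hT hε hU' n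
  set b := ballCoverNum X (ε / M ^ n) with hb
  have hreal : ((k ^ (n + m) * b : ℕ) : ℝ) ≤ Real.exp (c * n) := by
    rcases Nat.eq_zero_or_pos b with h0 | hpos
    · simp only [h0, mul_zero, Nat.cast_zero]
      positivity
    · have hk' : (0 : ℝ) < k := by exact_mod_cast hk
      have hb' : (0 : ℝ) < b := by exact_mod_cast hpos
      push_cast
      rw [← Real.log_le_iff_le_exp (by positivity), Real.log_mul (by positivity) hb'.ne',
        Real.log_pow]
      push_cast
      linarith
  have hexp : EReal.exp ((c : EReal) * (n : EReal)) = ENNReal.ofReal (Real.exp (c * n)) := by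
    rw [← EReal.exp_coe]
    norm_cast
  rw [hexp]
  calc ((Dynamics.coverMincard (skewProd T) Set.univ U n : ℕ∞) : ENNReal)
      ≤ (((k ^ (n + m) * b : ℕ) : ℕ∞) : ENNReal) := ENat.toENNReal_mono hmin
    _ = ENNReal.ofReal ((k ^ (n + m) * b : ℕ) : ℝ) := by
        rw [ENNReal.ofReal_natCast, ENat.toENNReal_coe]
    _ ≤ ENNReal.ofReal (Real.exp (c * n)) := ENNReal.ofReal_le_ofReal hreal

/-- if `X` has finite ball dimension and each `T i` is Lipschitz with
constant `L i`, with `L = maxᵢ max{1, L i}`, then the topological entropy of the skew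
product `σ̃` on `Σ_k × X` is at most `log k + D(X) · log L`. -/
theorem coverEntropy_skewProd_le {X : Type*} [MetricSpace X] [CompactSpace X] {k : ℕ}
    (hk : 0 < k) (T : Fin k → X → X) (L : Fin k → NNReal) (hL : ∀ i, LipschitzWith (L i) (T i))
    (hD : ballDim X ≠ ⊤) :
    Dynamics.coverEntropy (skewProd T) (Set.univ : Set ((ℕ → Fin k) × X)) ≤
      ((Real.log k + (ballDim X).toReal * Real.log (⨆ i : Fin k, max 1 (L i : ℝ)) : ℝ) : EReal) := by
  set S : ℝ := ⨆ i : Fin k, max 1 (L i : ℝ) with hS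
  set D : ℝ := (ballDim X).toReal with hDdef
  have hle : ∀ i, max 1 (L i : ℝ) ≤ S := fun i =>
    le_ciSup (f := fun i : Fin k => max 1 (L i : ℝ)) (Set.finite_range _).bddAbove i
  have hS1 : 1 ≤ S := (le_max_left _ _).trans (hle ⟨0, hk⟩)
  refine iSup₂_le fun U hU => EReal.le_of_forall_lt_iff_le.1 fun c hc => ?_
  rw [EReal.coe_lt_coe_iff] at hc
  -- Both `D` and `S` are enlarged by the same small `δ`.
  have hcont : ContinuousAt (fun δ : ℝ => Real.log k + (D + δ) * Real.log (S + δ)) 0 := by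
    have hne : S + 0 ≠ 0 := by linarith
    exact continuousAt_const.add ((continuousAt_const.add continuousAt_id).mul
      ((continuousAt_const.add continuousAt_id).log hne))
  have hev : ∀ᶠ δ in 𝓝[>] (0 : ℝ), Real.log k + (D + δ) * Real.log (S + δ) < c :=
    nhdsWithin_le_nhds (hcont.eventually (gt_mem_nhds (by simpa using hc)))
  obtain ⟨δ, hδc, hδ⟩ := (hev.and self_mem_nhdsWithin).exists
  have hδ0 : 0 < δ := hδ
  refine coverEntropyEntourage_skewProd_le hk T (M := S + δ) (D := D + δ) (by linarith) ?_ ?_ hδc hU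
  · intro i x y
    refine ((hL i).dist_le_mul x y).trans (mul_le_mul_of_nonneg_right ?_ dist_nonneg)
    linarith [le_max_right 1 (L i : ℝ), hle i]
  · refine (EReal.le_coe_toReal hD).trans_lt ?_
    rw [EReal.coe_lt_coe_iff]
    linarith
end
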